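/- Let Λ = [[R, M], [0, S]] be a triangular matrix ring with M cocompatible as an (R,S)-bimodule, meaning: M_S is flat, M ⊗_S E is injective for every injective S-module E, and M ⊗_S − preserves totally acyclic complexes of injective modules. Then an object X = (X₁, X₂, φ) of the monomorphism category Mon(Λ) is a Gorenstein injective object of Mon(Λ) if and only if X₁ is a Gorenstein injective R-module, X₂ is a Gorenstein injective S-module, and φ : M ⊗_S X₂ → X₁ is a monomorphism. -/

import Mathlib

open CategoryTheory CategoryTheory.Limits

universe u

variable {R S : Type u} [Ring R] [Ring S]

/-- For the upper triangular matrix ring `Λ = [[R, M], [0, S]]`, left `Λ`-modules are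
identified with triples `(X₁, X₂, φ)` where `X₁` is a left `R`-module, `X₂` is a left
`S`-module and `φ : M ⊗_S X₂ → X₁` is `R`-linear.  We model this as the comma category
of the right exact functor `T = M ⊗_S − : S-Mod ⥤ R-Mod` over the identity of `R-Mod`:
an object `X` has `X.left = X₂`, `X.right = X₁` and `X.hom = φ : T(X₂) ⟶ X₁`. -/
abbrev TriMod (T : ModuleCat.{u} S ⥤ ModuleCat.{u} R) :=
  Comma T (𝟭 (ModuleCat.{u} R))

variable (T : ModuleCat.{u} S ⥤ ModuleCat.{u} R)

/-- Membership in the monomorphism category `Mon(Λ)`: the structure map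
`φ : M ⊗_S X₂ → X₁` is a monomorphism. -/
def InMon (X : TriMod T) : Prop := Mono X.hom

/-- A short exact sequence of `Λ`-modules (equivalently, a componentwise short exact
sequence of triples); these are the admissible short exact sequences of the exact
category `Mon(Λ)` when all three terms lie in `Mon(Λ)`. -/
def TriSES {X Y Z : TriMod T} (f : X ⟶ Y) (g : Y ⟶ Z) : Prop :=
  (∃ w : f.left ≫ g.left = 0, (ShortComplex.mk f.left g.left w).ShortExact) ∧
  (∃ w : f.right ≫ g.right = 0, (ShortComplex.mk f.right g.right w).ShortExact)

/-- `X` is an injective object of the exact category `Mon(Λ)`: `X ∈ Mon(Λ)` and every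
admissible monomorphism out of `X` in `Mon(Λ)` splits. -/
def MonInjective (X : TriMod T) : Prop :=
  InMon T X ∧ ∀ {Y Z : TriMod T} (u : X ⟶ Y) (g : Y ⟶ Z), InMon T Y → InMon T Z →
    TriSES T u g → ∃ r : Y ⟶ X, u ≫ r = 𝟙 X

/-- `(E, d)` is a totally acyclic complex of injective objects in an abelian category:
all components are injective, the complex is exact, and `Hom(I, E•)` is exact for every
injective `I`. -/
def IsTotAcyclicInj {𝒞 : Type*} [Category 𝒞] [Abelian 𝒞]
    (E : ℤ → 𝒞) (d : ∀ n : ℤ, E n ⟶ E (n + 1)) : Prop :=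
  (∀ n, Injective (E n)) ∧
  (∀ n : ℤ, ∃ w : d n ≫ d (n + 1) = 0, (ShortComplex.mk (d n) (d (n + 1)) w).Exact) ∧
  (∀ (I : 𝒞), Injective I → ∀ (n : ℤ) (u : I ⟶ E (n + 1)), u ≫ d (n + 1) = 0 →
    ∃ v : I ⟶ E n, v ≫ d n = u)

/-- `X` is a Gorenstein injective object of an abelian category: `X` is the kernel
`ker(E⁰ → E¹)` of some totally acyclic complex of injectives `E•`. -/
def IsGorensteinInjective {𝒞 : Type*} [Category 𝒞] [Abelian 𝒞] (X : 𝒞) : Prop :=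
  ∃ (E : ℤ → 𝒞) (d : ∀ n : ℤ, E n ⟶ E (n + 1)), IsTotAcyclicInj E d ∧
    ∃ (ι : X ⟶ E 0) (w : ι ≫ d 0 = 0), Mono ι ∧ (ShortComplex.mk ι (d 0) w).Exact

/-- `X` is a Gorenstein injective object of the exact category `Mon(Λ)`: `X ∈ Mon(Λ)`
and `X` is the kernel (computed componentwise) of an exact complex `E•` of injective
objects of `Mon(Λ)` such that `Hom(I, E•)` is exact for every injective object `I` of
`Mon(Λ)`. -/
def MonGorensteinInjective (X : TriMod T) : Prop :=
  InMon T X ∧ ∃ (E : ℤ → TriMod T) (d : ∀ n : ℤ, E n ⟶ E (n + 1)),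
    (∀ n, MonInjective T (E n)) ∧
    (∀ n : ℤ, ∃ w : (d n).left ≫ (d (n + 1)).left = 0,
      (ShortComplex.mk (d n).left (d (n + 1)).left w).Exact) ∧
    (∀ n : ℤ, ∃ w : (d n).right ≫ (d (n + 1)).right = 0,
      (ShortComplex.mk (d n).right (d (n + 1)).right w).Exact) ∧
    (∀ (I : TriMod T), MonInjective T I → ∀ (n : ℤ) (u : I ⟶ E (n + 1)),
      (u ≫ d (n + 1)).left = 0 → (u ≫ d (n + 1)).right = 0 →
        ∃ v : I ⟶ E n, v ≫ d n = u) ∧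
    ∃ ι : X ⟶ E 0,
      (∃ w : ι.left ≫ (d 0).left = 0, Mono ι.left ∧
        (ShortComplex.mk ι.left (d 0).left w).Exact) ∧
      (∃ w : ι.right ≫ (d 0).right = 0, Mono ι.right ∧
        (ShortComplex.mk ι.right (d 0).right w).Exact)

/-! Write `T = M ⊗_S −`. If `X₁` and `X₂` are injective and `φ` is monic, then `X` is an injective
object of `Mon(Λ)`; conversely, testing an injective object of `Mon(Λ)` against two suitable
admissible monomorphisms shows that its components are injective. Hence the components of a totally
acyclic complex in `Mon(Λ)` are complexes of injectives, and testing against `(I, 0, 0)` and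
`(T I, I, id)` shows that they are totally acyclic.

Conversely, let `E` and `F` be totally acyclic complexes with kernels `X₂` and `X₁`. By the
assumptions on `M`, `T E` is totally acyclic with kernel `T X₂`, so `φ` extends to a chain map
`T E ⟶ F`. Adding a contractible complex of injectives to `F` makes this map monic in every degree
without changing the kernel, and the triples `(Fₙ, Eₙ, T Eₙ ⟶ Fₙ)` then form the required complex.
-/

lemma exists_int_seq {B : ℤ → Type*} (r : ∀ n, B n → B (n + 1) → Prop) (b₀ : B 0)
    (hsucc : ∀ n b, ∃ c, r n b c) (hpred : ∀ n c, ∃ b, r n b c) :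
    ∃ s : ∀ n, B n, s 0 = b₀ ∧ ∀ n, r n (s n) (s (n + 1)) := by
  choose succ hsucc using hsucc
  choose pred hpred using hpred
  let s : ∀ n, B n := fun n ↦ Int.rec (motive := B)
    (fun k ↦ Nat.rec b₀ (fun k b ↦ succ (Int.ofNat k) b) k)
    (fun k ↦ Nat.rec (pred (Int.negSucc 0) b₀) (fun k b ↦ pred (Int.negSucc (k + 1)) b) k) n
  refine ⟨s, rfl, fun n ↦ ?_⟩
  match n with
  | Int.ofNat _ => exact hsucc _ _
  | Int.negSucc 0 => exact hpred _ _
  | Int.negSucc (_ + 1) => exact hpred _ _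

section Preadditive

variable {𝒞 : Type*} [Category 𝒞] [Preadditive 𝒞]

lemma exists_comp_eq_of_isSplitMono {P I C D : 𝒞} (θ : P ⟶ I) [IsSplitMono θ] (v : I ⟶ C)
    (d : C ⟶ D) (t : P ⟶ C) (h : t ≫ d = θ ≫ v ≫ d) :
    ∃ v' : I ⟶ C, v' ≫ d = v ≫ d ∧ θ ≫ v' = t :=
  ⟨v + retraction θ ≫ (t - θ ≫ v), by simp [h], by simp⟩

variable [HasBinaryBiproducts 𝒞] (H : ℤ → 𝒞)

/-- Degree `n` of the contractible complex that is the direct sum over `m` of the identity complexes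
`H m ⟶ H m` in degrees `m - 1` and `m`. Adding it to a complex makes room for a monomorphism into
the sum. -/
noncomputable abbrev contractibleObj (n : ℤ) : 𝒞 := H n ⊞ H (n + 1)

/-- The differential of the contractible complex with terms `contractibleObj H n`. -/
noncomputable abbrev contractibleD (n : ℤ) : contractibleObj H n ⟶ contractibleObj H (n + 1) :=
  biprod.snd ≫ biprod.inl

variable {H}

lemma exists_comp_contractibleD {I : 𝒞} {n : ℤ} (u : I ⟶ contractibleObj H (n + 1))
    (hu : u ≫ contractibleD H (n + 1) = 0) :
    ∃ v : I ⟶ contractibleObj H n, v ≫ contractibleD H n = u := by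
  have hu_snd : u ≫ biprod.snd = 0 := by
    rwa [← Category.assoc, ← zero_comp, cancel_mono] at hu
  exact ⟨biprod.lift 0 (u ≫ biprod.fst), by ext <;> simp [hu_snd]⟩

lemma mono_contractibleD_of_isZero {n : ℤ} (hn : IsZero (H n)) : Mono (contractibleD H n) :=
  Preadditive.mono_of_cancel_zero _ fun x hx ↦ by
    ext
    · exact hn.eq_of_tgt _ _
    · rw [zero_comp]
      rwa [← Category.assoc, ← zero_comp, cancel_mono] at hx

end Preadditive

section Abelian

open scoped ZeroObject

variable {𝒞 : Type*} [Category 𝒞] [Abelian 𝒞]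

lemma exact_of_exists_lift {X Y Z : 𝒞} {f : X ⟶ Y} {g : Y ⟶ Z} (w : f ≫ g = 0)
    (h : ∀ {A : 𝒞} (u : A ⟶ Y), u ≫ g = 0 → ∃ v : A ⟶ X, v ≫ f = u) :
    (ShortComplex.mk f g w).Exact := by
  refine (ShortComplex.exact_iff_exact_up_to_refinements _).2 fun A u hu ↦ ?_
  obtain ⟨v, hv⟩ := h u hu
  exact ⟨A, 𝟙 A, inferInstance, v, by simpa using hv.symm⟩

lemma exact_biprod_map {X Y Z X' Y' Z' : 𝒞} {f : X ⟶ Y} {g : Y ⟶ Z} {f' : X' ⟶ Y'}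
    {g' : Y' ⟶ Z'} {w : f ≫ g = 0} {w' : f' ≫ g' = 0} (h : (ShortComplex.mk f g w).Exact)
    (h' : (ShortComplex.mk f' g' w').Exact) :
    (ShortComplex.mk (biprod.map f f') (biprod.map g g')
      (by ext <;> simp [w, w'])).Exact := by
  refine (ShortComplex.exact_iff_exact_up_to_refinements _).2 fun A u hu ↦ ?_
  obtain ⟨B, π, _, x, hx⟩ := h.exact_up_to_refinements (u ≫ biprod.fst)
    (by simpa using hu =≫ biprod.fst)
  obtain ⟨C, ρ, _, x', hx'⟩ := h'.exact_up_to_refinements (π ≫ u ≫ biprod.snd)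
    (by simpa using π ≫= hu =≫ biprod.snd)
  exact ⟨C, ρ ≫ π, inferInstance, biprod.lift (ρ ≫ x) x',
    by ext <;> simp_all⟩

lemma exact_inl_biprod_map {X Y Z Y' Z' : 𝒞} {f : X ⟶ Y} {g : Y ⟶ Z} {w : f ≫ g = 0}
    (h : (ShortComplex.mk f g w).Exact) (m : Y' ⟶ Z') [Mono m] :
    (ShortComplex.mk (f ≫ biprod.inl) (biprod.map g m) (by simp [reassoc_of% w])).Exact := by
  refine (ShortComplex.exact_iff_exact_up_to_refinements _).2 fun A u hu ↦ ?_
  have hu_snd : u ≫ biprod.snd = 0 := by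
    simpa [← cancel_mono m] using hu =≫ biprod.snd
  obtain ⟨B, π, _, x, hx⟩ := h.exact_up_to_refinements (u ≫ biprod.fst)
    (by simpa using hu =≫ biprod.fst)
  exact ⟨B, π, inferInstance, x, by ext <;> simp_all⟩

lemma mono_biprod_lift_of_exact {X Y Z A : 𝒞} {f : X ⟶ Y} {g : Y ⟶ Z} {w : f ≫ g = 0}
    (h : (ShortComplex.mk f g w).Exact) (e : Y ⟶ A) [Mono (f ≫ e)] :
    Mono (biprod.lift e g) := by
  refine Preadditive.mono_of_cancel_zero _ fun {W} y hy ↦ ?_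
  obtain ⟨B, π, _, x, hx⟩ := h.exact_up_to_refinements y (by simpa using hy =≫ biprod.snd)
  have hxf : x ≫ f ≫ e = 0 := by
    simpa [reassoc_of% hx] using π ≫= hy =≫ biprod.fst
  have : x = 0 := zero_of_comp_mono _ hxf
  simpa [this, ← cancel_epi π] using hx

lemma exists_injective_isZero_mono {ι : Type*} (D : ι → 𝒞) (hD : ∀ i, Injective (D i)) (i₀ : ι) :
    ∃ (H : ι → 𝒞) (h : ∀ i, D i ⟶ H i), (∀ i, Injective (H i)) ∧ IsZero (H i₀) ∧
      ∀ i ≠ i₀, Mono (h i) := by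
  have hH : ∀ i, ∃ (H : 𝒞) (h : D i ⟶ H), Injective H ∧ (i = i₀ → IsZero H) ∧
      (i ≠ i₀ → Mono h) := fun i ↦ by
    by_cases hi : i = i₀
    · exact ⟨0, 0, (isZero_zero 𝒞).injective, fun _ ↦ isZero_zero 𝒞, fun h ↦ absurd hi h⟩
    · exact ⟨D i, 𝟙 _, hD i, fun h ↦ absurd h hi, fun _ ↦ inferInstance⟩
  choose H h hinj hzero hmono using hH
  exact ⟨H, h, hinj, hzero i₀ rfl, hmono⟩

namespace IsTotAcyclicInj

variable {D F G : ℤ → 𝒞} {a : ∀ n, D n ⟶ D (n + 1)} {d : ∀ n, F n ⟶ F (n + 1)}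
  {δ : ∀ n, G n ⟶ G (n + 1)}

lemma d_comp_d (hF : IsTotAcyclicInj F d) (n : ℤ) : d n ≫ d (n + 1) = 0 := (hF.2.1 n).1

lemma biprod (hF : IsTotAcyclicInj F d) (hG : IsTotAcyclicInj G δ) :
    IsTotAcyclicInj (fun n ↦ F n ⊞ G n) (fun n ↦ biprod.map (d n) (δ n)) := by
  obtain ⟨injF, exF, liftF⟩ := hF
  obtain ⟨injG, exG, liftG⟩ := hG
  refine ⟨fun n ↦ inferInstance, fun n ↦ ⟨_, exact_biprod_map (exF n).2 (exG n).2⟩,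
    fun I hI n u hu ↦ ?_⟩
  obtain ⟨v, hv⟩ := liftF I hI n (u ≫ biprod.fst) (by simpa using hu =≫ biprod.fst)
  obtain ⟨v', hv'⟩ := liftG I hI n (u ≫ biprod.snd) (by simpa using hu =≫ biprod.snd)
  exact ⟨biprod.lift v v', by ext <;> simp [hv, hv']⟩

lemma contractible {H : ℤ → 𝒞} (hH : ∀ n, Injective (H n)) :
    IsTotAcyclicInj (contractibleObj H) (contractibleD H) :=
  ⟨fun _ ↦ inferInstance, fun _ ↦ ⟨by simp, exact_of_exists_lift _ exists_comp_contractibleD⟩,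
    fun _ _ _ ↦ exists_comp_contractibleD⟩

/-- To build the chain map degree by degree in both directions, carry along in degree `n` only
those `fₙ` for which `fₙ ≫ dₙ` factors through `aₙ`: exactness of `D` extends such an `fₙ` to the
right, and `Hom(D n, -)`-exactness of `F` extends it to the left. -/
lemma exists_chainMap (hD : IsTotAcyclicInj D a) (hF : IsTotAcyclicInj F d) (f₀ : D 0 ⟶ F 0)
    (hf₀ : ∃ g, a 0 ≫ g = f₀ ≫ d 0) :
    ∃ f : ∀ n, D n ⟶ F n, f 0 = f₀ ∧ ∀ n, a n ≫ f (n + 1) = f n ≫ d n := by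
  obtain ⟨f, hf, hcomm⟩ := exists_int_seq
    (B := fun n ↦ {f : D n ⟶ F n // ∃ g, a n ≫ g = f ≫ d n})
    (fun n f g ↦ a n ≫ g.1 = f.1 ≫ d n) ⟨f₀, hf₀⟩
    (fun n ⟨f, g, hg⟩ ↦ by
      have := hF.1 (n + 1 + 1)
      obtain ⟨w, ex⟩ := hD.2.1 n
      have hz : a n ≫ g ≫ d (n + 1) = 0 := by rw [reassoc_of% hg, hF.d_comp_d, comp_zero]
      exact ⟨⟨g, ex.descToInjective (g ≫ d (n + 1)) hz, ex.comp_descToInjective _ _⟩, hg⟩)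
    (fun n ⟨g, g', hg'⟩ ↦ by
      obtain ⟨f, hf⟩ := hF.2.2 (D n) (hD.1 n) n (a n ≫ g)
        (by rw [Category.assoc, ← hg', reassoc_of% hD.d_comp_d n, zero_comp])
      exact ⟨⟨f, g, hf.symm⟩, hf.symm⟩)
  exact ⟨fun n ↦ (f n).1, congrArg Subtype.val hf, hcomm⟩

lemma exists_chainMap_extending {P X : 𝒞} {j : P ⟶ D 0} {ι : X ⟶ F 0} {wj : j ≫ a 0 = 0}
    (hD : IsTotAcyclicInj D a) (hF : IsTotAcyclicInj F d) [Mono j]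
    (hj : (ShortComplex.mk j (a 0) wj).Exact) (wι : ι ≫ d 0 = 0) (φ : P ⟶ X) :
    ∃ f : ∀ n, D n ⟶ F n, j ≫ f 0 = φ ≫ ι ∧ ∀ n, a n ≫ f (n + 1) = f n ≫ d n := by
  have := hF.1
  let f₀ : D 0 ⟶ F 0 := Injective.factorThru (φ ≫ ι) j
  have hf₀ : j ≫ f₀ = φ ≫ ι := Injective.comp_factorThru _ _
  have hz : j ≫ f₀ ≫ d 0 = 0 := by rw [reassoc_of% hf₀, wι, comp_zero]
  obtain ⟨f, hf, hcomm⟩ := hD.exists_chainMap hF f₀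
    ⟨hj.descToInjective (f₀ ≫ d 0) hz, hj.comp_descToInjective _ _⟩
  exact ⟨f, by rw [hf, hf₀], hcomm⟩

/-- Adding to `F` a contractible complex with vanishing term `H 0` leaves the kernel in degree `0`
unchanged, while a map to it that is monic in all other degrees makes `D ⟶ F` monic there. In degree
`0`, `f 0` is already monic on the kernel of `a 0`. -/
lemma exists_mono_chainMap {P X : 𝒞} {j : P ⟶ D 0} {ι : X ⟶ F 0} {wj : j ≫ a 0 = 0}
    {wι : ι ≫ d 0 = 0} (hD : IsTotAcyclicInj D a) (hF : IsTotAcyclicInj F d) [Mono j] [Mono ι]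
    (hj : (ShortComplex.mk j (a 0) wj).Exact) (hι : (ShortComplex.mk ι (d 0) wι).Exact)
    (φ : P ⟶ X) [Mono φ] :
    ∃ (G : ℤ → 𝒞) (δ : ∀ n, G n ⟶ G (n + 1)) (ψ : ∀ n, D n ⟶ G n) (κ : X ⟶ G 0)
      (w : κ ≫ δ 0 = 0), IsTotAcyclicInj G δ ∧ (∀ n, Mono (ψ n)) ∧
        (∀ n, a n ≫ ψ (n + 1) = ψ n ≫ δ n) ∧ Mono κ ∧ (ShortComplex.mk κ (δ 0) w).Exact ∧
        j ≫ ψ 0 = φ ≫ κ := by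
  obtain ⟨f, hf₀, hf⟩ := exists_chainMap_extending hD hF hj wι φ
  obtain ⟨H, h, injH, zeroH, monoh⟩ := exists_injective_isZero_mono D hD.1 0
  have : Mono (contractibleD H 0) := mono_contractibleD_of_isZero zeroH
  refine ⟨fun n ↦ F n ⊞ contractibleObj H n, fun n ↦ biprod.map (d n) (contractibleD H n),
    fun n ↦ biprod.lift (f n) (biprod.lift (h n) (a n ≫ h (n + 1))), ι ≫ biprod.inl, _,
    hF.biprod (contractible injH), fun n ↦ ?_, fun n ↦ ?_, inferInstance,
    exact_inl_biprod_map hι _, ?_⟩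
  · rcases eq_or_ne n 0 with rfl | hn
    · have := monoh (0 + 1) (by decide)
      have : Mono (j ≫ f 0) := hf₀ ▸ inferInstance
      have := mono_biprod_lift_of_exact hj (f 0)
      have fac : biprod.lift (f 0) (biprod.lift (h 0) (a 0 ≫ h (0 + 1))) ≫
          biprod.map (𝟙 _) biprod.snd = biprod.lift (f 0) (a 0) ≫ biprod.map (𝟙 _) (h (0 + 1)) := by
        ext <;> simp
      exact mono_of_mono_fac fac
    · have := monoh n hn
      have fac : biprod.lift (f n) (biprod.lift (h n) (a n ≫ h (n + 1))) ≫
          biprod.snd ≫ biprod.fst = h n := by simp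
      exact mono_of_mono_fac fac
  · ext <;> simp [hf, reassoc_of% hD.d_comp_d]
  · have : h 0 = 0 := zeroH.eq_of_tgt _ _
    ext <;> simp [hf₀, this, reassoc_of% wj]

end IsTotAcyclicInj

end Abelian

section Mon

open scoped ZeroObject

variable {T} {X : TriMod T}

namespace TriMod

/-- The structure map `φ : M ⊗_S X₂ ⟶ X₁`: this is `X.hom`, with its target written as `X.right`
instead of the value of the identity functor at `X.right`. -/
abbrev str (X : TriMod T) : T.obj X.left ⟶ X.right := X.hom

lemma map_left_comp_str {X Y : TriMod T} (u : X ⟶ Y) :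
    T.map u.left ≫ Y.str = X.str ≫ u.right := u.w

variable (T)

/-- The triple `(I, 0, 0)`; maps from it to `Y` are maps `I ⟶ Y₁`. -/
noncomputable abbrev ofRight (I : ModuleCat.{u} R) : TriMod T := ⟨0, I, 0⟩

/-- The triple `(M ⊗_S I, I, id)`; maps from it to `Y` are maps `I ⟶ Y₂`. -/
abbrev ofLeft (I : ModuleCat.{u} S) : TriMod T := ⟨I, T.obj I, 𝟙 _⟩

lemma isZero_map_ofRight_left [T.PreservesZeroMorphisms] (I : ModuleCat.{u} R) :
    IsZero (T.obj (ofRight T I).left) := T.map_isZero (isZero_zero _)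

lemma inMon_ofRight [T.PreservesZeroMorphisms] (I : ModuleCat.{u} R) : InMon T (ofRight T I) :=
  ⟨fun _ _ _ ↦ (isZero_map_ofRight_left T I).eq_of_tgt _ _⟩

lemma inMon_ofLeft (I : ModuleCat.{u} S) : InMon T (ofLeft T I) :=
  inferInstanceAs (Mono (𝟙 (T.obj I)))

end TriMod

open TriMod

/-- Retractions of `u.left` and `u.right` need not commute with the structure maps; their defect
`ε` vanishes on `T X₂`, so it factors through `T Z₂` and then extends along the structure map of
`Z`; subtracting the extension from the second retraction corrects it. -/
lemma monInjective_of_injective [PreservesFiniteColimits T] (hX : InMon T X)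
    [Injective X.left] [Injective X.right] : MonInjective T X := by
  refine ⟨hX, fun {Y Z} u g _ hZ ⟨⟨_, exl⟩, ⟨wr, exr⟩⟩ ↦ ?_⟩
  have : Mono Z.str := hZ
  have : Mono u.left := exl.mono_f
  have : Mono u.right := exr.mono_f
  let r₂ : Y.left ⟶ X.left := Injective.factorThru (𝟙 _) u.left
  have hr₂ : u.left ≫ r₂ = 𝟙 _ := Injective.comp_factorThru _ _
  let r₁ : Y.right ⟶ X.right := Injective.factorThru (𝟙 _) u.right
  have hr₁ : u.right ≫ r₁ = 𝟙 _ := Injective.comp_factorThru _ _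
  let ε : T.obj Y.left ⟶ X.right := Y.str ≫ r₁ - T.map r₂ ≫ X.str
  have hε : T.map u.left ≫ ε = 0 := by
    simp only [ε, Preadditive.comp_sub, reassoc_of% map_left_comp_str u, ← T.map_comp_assoc, hr₁,
      hr₂, T.map_id, Category.comp_id, Category.id_comp, sub_self]
  have := exl.epi_g
  have exT := exl.exact.map_of_epi_of_preservesCokernel T ‹_› inferInstance
  let ε' : T.obj Z.left ⟶ X.right := exT.descToInjective ε hε
  have hε' : T.map g.left ≫ ε' = ε := exT.comp_descToInjective ε hε
  let ε'' : Z.right ⟶ X.right := Injective.factorThru ε' Z.str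
  have hε'' : Z.str ≫ ε'' = ε' := Injective.comp_factorThru _ _
  refine ⟨⟨r₂, r₁ - g.right ≫ ε'', ?_⟩, CommaMorphism.ext hr₂ ?_⟩
  · change T.map r₂ ≫ X.str = Y.str ≫ (r₁ - g.right ≫ ε'')
    rw [Preadditive.comp_sub, ← Category.assoc Y.str, ← map_left_comp_str g, Category.assoc, hε'',
      hε', sub_sub_cancel]
  · change u.right ≫ (r₁ - g.right ≫ ε'') = 𝟙 _
    rw [Preadditive.comp_sub, hr₁, reassoc_of% wr, zero_comp, sub_zero]

lemma MonInjective.injective_right [T.PreservesZeroMorphisms] (hX : MonInjective T X) :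
    Injective X.right := by
  have : Mono X.str := hX.1
  let i : X.right ⟶ Injective.under X.right := Injective.ι _
  let Y : TriMod T := ⟨X.left, Injective.under X.right, X.str ≫ i⟩
  let v : X ⟶ Y := { left := 𝟙 _, right := i }
  let g : Y ⟶ ofRight T (cokernel i) := { left := 0, right := cokernel.π i }
  have hY : InMon T Y := mono_comp X.str i
  obtain ⟨r, hr⟩ := hX.2 v g hY (inMon_ofRight T _)
    ⟨⟨comp_zero, (ShortComplex.Splitting.ofIsIsoOfIsZero _
      (inferInstanceAs (IsIso (𝟙 X.left))) (isZero_zero _)).shortExact⟩,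
      ⟨cokernel.condition i, ⟨ShortComplex.cokernelSequence_exact i⟩⟩⟩
  exact Retract.injective (Y := Injective.under X.right)
    ⟨i, r.right, congrArg CommaMorphism.right hr⟩

lemma MonInjective.injective_left [PreservesFiniteLimits T] [PreservesFiniteColimits T]
    (hX : MonInjective T X) : Injective X.left := by
  have := hX.injective_right
  have : Mono X.str := hX.1
  let i : X.left ⟶ Injective.under X.left := Injective.ι _
  let p : Injective.under X.left ⟶ cokernel i := cokernel.π i
  have exi : (ShortComplex.mk i p (cokernel.condition i)).ShortExact :=
    ⟨ShortComplex.cokernelSequence_exact i⟩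
  let e : T.obj (Injective.under X.left) ⟶ X.right := Injective.factorThru X.str (T.map i)
  have he : T.map i ≫ e = X.str := Injective.comp_factorThru _ _
  have : Mono (T.map i ≫ e) := he ▸ hX.1
  let Y : TriMod T :=
    ⟨Injective.under X.left, X.right ⊞ T.obj (cokernel i), biprod.lift e (T.map p)⟩
  have hv : T.map i ≫ biprod.lift e (T.map p) = X.str ≫ biprod.inl := by
    apply biprod.hom_ext
    · simp [he]
    · simp [p, ← T.map_comp]
  let v : X ⟶ Y := { left := i, right := biprod.inl, w := hv }
  let g : Y ⟶ ofLeft T (cokernel i) := { left := p, right := biprod.snd }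
  have hY : InMon T Y := mono_biprod_lift_of_exact (exi.exact.map T) e
  obtain ⟨r, hr⟩ := hX.2 v g hY (inMon_ofLeft T _)
    ⟨⟨_, exi⟩, ⟨_, (ShortComplex.Splitting.ofHasBinaryBiproduct _ _).shortExact⟩⟩
  exact Retract.injective (Y := Injective.under X.left) ⟨i, r.left, congrArg CommaMorphism.left hr⟩

lemma MonInjective.exists_lift [PreservesFiniteLimits T] [PreservesFiniteColimits T]
    [T.PreservesInjectiveObjects] {I Y Z : TriMod T} (hI : MonInjective T I) (d : Y ⟶ Z) (u : I ⟶ Z)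
    (hl : ∃ v, v ≫ d.left = u.left) (hr : ∃ v, v ≫ d.right = u.right) :
    ∃ v : I ⟶ Y, v ≫ d = u := by
  obtain ⟨v₂, hv₂⟩ := hl
  obtain ⟨v₁, hv₁⟩ := hr
  have := hI.injective_left
  have : Mono I.str := hI.1
  have : IsSplitMono I.str :=
    ⟨⟨Injective.factorThru (𝟙 (T.obj I.left)) I.str, Injective.comp_factorThru _ _⟩⟩
  have hd : (T.map v₂ ≫ Y.str) ≫ d.right = I.str ≫ v₁ ≫ d.right := by
    rw [Category.assoc, ← map_left_comp_str d, ← T.map_comp_assoc, hv₂, hv₁, map_left_comp_str u]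
  obtain ⟨v, hv, hv'⟩ := exists_comp_eq_of_isSplitMono I.str v₁ d.right (T.map v₂ ≫ Y.str) hd
  exact ⟨⟨v₂, v, hv'.symm⟩, CommaMorphism.ext hv₂ (hv.trans hv₁)⟩

lemma MonGorensteinInjective.isGorensteinInjective_right [PreservesFiniteColimits T]
    (hX : MonGorensteinInjective T X) : IsGorensteinInjective X.right := by
  obtain ⟨-, E, d, injE, -, exr, liftE, ι, -, ⟨w, mono, ex⟩⟩ := hX
  refine ⟨fun n ↦ (E n).right, fun n ↦ (d n).right, ⟨fun n ↦ (injE n).injective_right, exr,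
    fun I hI n u hu ↦ ?_⟩, ι.right, w, mono, ex⟩
  have : Injective (ofRight T I).left := (isZero_zero _).injective
  have : Injective (ofRight T I).right := hI
  obtain ⟨v, hv⟩ := liftE (ofRight T I) (monInjective_of_injective (inMon_ofRight T I)) n
    { left := 0
      right := u
      w := (isZero_map_ofRight_left T I).eq_of_src _ _ } zero_comp hu
  exact ⟨v.right, congrArg CommaMorphism.right hv⟩

lemma MonGorensteinInjective.isGorensteinInjective_left [PreservesFiniteLimits T]
    [PreservesFiniteColimits T] [T.PreservesInjectiveObjects] (hX : MonGorensteinInjective T X) :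
    IsGorensteinInjective X.left := by
  obtain ⟨-, E, d, injE, exl, -, liftE, ι, ⟨w, mono, ex⟩, -⟩ := hX
  refine ⟨fun n ↦ (E n).left, fun n ↦ (d n).left, ⟨fun n ↦ (injE n).injective_left, exl,
    fun I hI n u hu ↦ ?_⟩, ι.left, w, mono, ex⟩
  have hu' : (T.map u ≫ (E (n + 1)).str) ≫ (d (n + 1)).right = 0 := by
    rw [Category.assoc, ← map_left_comp_str (d (n + 1)), ← T.map_comp_assoc, hu, T.map_zero,
      zero_comp]
  have : Injective (ofLeft T I).left := hI
  have : Injective (ofLeft T I).right := T.injective_obj I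
  obtain ⟨v, hv⟩ := liftE (ofLeft T I) (monInjective_of_injective (inMon_ofLeft T I)) n
    { left := u
      right := T.map u ≫ (E (n + 1)).str } hu hu'
  exact ⟨v.left, congrArg CommaMorphism.left hv⟩

lemma monGorensteinInjective_of_isGorensteinInjective [PreservesFiniteLimits T]
    [PreservesFiniteColimits T] [T.PreservesInjectiveObjects]
    (htot : ∀ (E : ℤ → ModuleCat.{u} S) (d : ∀ n : ℤ, E n ⟶ E (n + 1)),
      IsTotAcyclicInj E d → IsTotAcyclicInj (fun n ↦ T.obj (E n)) (fun n ↦ T.map (d n)))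
    (hX : InMon T X) (hr : IsGorensteinInjective X.right) (hl : IsGorensteinInjective X.left) :
    MonGorensteinInjective T X := by
  obtain ⟨E, a, hE, j, wj, _, exj⟩ := hl
  obtain ⟨F, d, hF, ι, wι, _, exι⟩ := hr
  have : Mono X.str := hX
  obtain ⟨G, δ, ψ, κ, wκ, hG, monoψ, hψ, monoκ, exκ, hκ⟩ :=
    (htot E a hE).exists_mono_chainMap hF (exj.map T) exι X.str
  let Y : ℤ → TriMod T := fun n ↦ ⟨E n, G n, ψ n⟩
  let D : ∀ n, Y n ⟶ Y (n + 1) := fun n ↦ ⟨a n, δ n, hψ n⟩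
  have hY : ∀ n, MonInjective T (Y n) := fun n ↦
    have : Injective (Y n).left := hE.1 n
    have : Injective (Y n).right := hG.1 n
    monInjective_of_injective (monoψ n)
  refine ⟨hX, Y, D, hY, hE.2.1, hG.2.1, fun I hI n u hul hur ↦ ?_,
    ⟨j, κ, hκ⟩, ⟨wj, ‹_›, exj⟩, ⟨wκ, monoκ, exκ⟩⟩
  exact hI.exists_lift (D n) u (hE.2.2 _ hI.injective_left n u.left hul)
    (hG.2.2 _ hI.injective_right n u.right hur)

end Mon

/-- Let `Λ = [[R, M], [0, S]]` with `M` a cocompatible bimodule: `M_S` is flat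
(`T = M ⊗_S −` preserves monomorphisms), `M ⊗_S E` is injective for every injective
`S`-module `E`, and `M ⊗_S −` preserves totally acyclic complexes of injectives.  Then
an object `X = (X₁, X₂, φ)` of `Mon(Λ)` is Gorenstein injective in `Mon(Λ)` if and only
if `X₁` is a Gorenstein injective `R`-module, `X₂` is a Gorenstein injective `S`-module
and `φ : M ⊗_S X₂ → X₁` is a monomorphism. -/
theorem stmt_17 [T.Additive] [PreservesFiniteColimits T]
    (hflat : ∀ {X Y : ModuleCat.{u} S} (f : X ⟶ Y), Mono f → Mono (T.map f))
    (hinj : ∀ E : ModuleCat.{u} S, Injective E → Injective (T.obj E))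
    (htot : ∀ (E : ℤ → ModuleCat.{u} S) (d : ∀ n : ℤ, E n ⟶ E (n + 1)),
      IsTotAcyclicInj E d →
        IsTotAcyclicInj (fun n => T.obj (E n)) (fun n => T.map (d n)))
    (X : TriMod T) (hX : InMon T X) :
    MonGorensteinInjective T X ↔
      (IsGorensteinInjective X.right ∧ IsGorensteinInjective X.left ∧ Mono X.hom) := by
  have : T.PreservesMonomorphisms := ⟨fun f hf ↦ hflat f hf⟩
  have : T.PreservesInjectiveObjects := ⟨fun {E} hE ↦ hinj E hE⟩
  have := T.preservesHomology_of_preservesMonos_and_cokernels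
  have := T.preservesFiniteLimits_of_preservesHomology
  exact ⟨fun h ↦ ⟨h.isGorensteinInjective_right, h.isGorensteinInjective_left, hX⟩,
    fun ⟨hr, hl, _⟩ ↦ monGorensteinInjective_of_isGorensteinInjective htot hX hr hl⟩
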